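/- Let A ⊆ B be an inclusion of unital C*-algebras with A a closed *-subalgebra of B containing the unit 1_B. Suppose that for all positive x, y ∈ A with x·y = 0 and every ε > 0 there exists a projection p ∈ B such that ‖p·x − x‖ ≤ ε and ‖(1−p)·y − y‖ ≤ ε. Then for every self-adjoint a ∈ A and every ε > 0 there exists a self-adjoint b ∈ B with finite spectrum such that ‖a − b‖ ≤ ε. -/

import Mathlib

/-- A projection in a C*-algebra: a self-adjoint idempotent. -/
def IsProjection {B : Type*} [Mul B] [Star B] (p : B) : Prop := star p = p ∧ p * p = p

namespace IsProjection

variable {B : Type*} [CStarAlgebra B] {p q : B}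

lemma isSelfAdjoint (hp : IsProjection p) : IsSelfAdjoint p := hp.1

lemma norm_le_one (hp : IsProjection p) : ‖p‖ ≤ 1 := by
  have h : ‖p‖ = ‖p‖ * ‖p‖ := by
    conv_lhs => rw [← hp.2]
    nth_rewrite 1 [← hp.1]
    exact CStarRing.norm_star_mul_self
  by_contra! h1
  nlinarith

lemma one_sub (hp : IsProjection p) : IsProjection (1 - p) := by
  refine ⟨by simp [hp.1], ?_⟩
  simp [sub_mul, mul_sub, hp.2]

lemma norm_mul_sub_comm (hp : IsProjection p) (hq : IsProjection q) :
    ‖p * q - q‖ = ‖q * p - q‖ := by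
  rw [← norm_star (p * q - q)]
  simp [hp.1, hq.1]

end IsProjection

section Order

variable {B : Type*} [CStarAlgebra B] [PartialOrder B] [StarOrderedRing B]

lemma norm_le_of_neg_algebraMap_le_of_le_algebraMap {y : B} {r : ℝ} (hr : 0 ≤ r)
    (h₁ : -algebraMap ℝ B r ≤ y) (h₂ : y ≤ algebraMap ℝ B r) (hy : IsSelfAdjoint y) :
    ‖y‖ ≤ r := by
  rw [← map_neg, algebraMap_le_iff_le_spectrum (a := y)] at h₁
  rw [le_algebraMap_iff_spectrum_le (a := y)] at h₂
  rw [← cfc_id' ℝ y]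
  exact norm_cfc_le hr fun t ht => abs_le.2 ⟨h₁ t ht, h₂ t ht⟩

/-- A projection almost annihilating `1 - g`, for a positive contraction `g`, is almost
dominated by `g`. -/
lemma IsProjection.le_add_algebraMap {p g : B} {δ : ℝ} (hp : IsProjection p) (hg : 0 ≤ g)
    (hg1 : ‖g‖ ≤ 1) (h : ‖p * (1 - g)‖ ≤ δ) : p ≤ g + algebraMap ℝ B (2 * δ) := by
  have hgs : IsSelfAdjoint g := .of_nonneg hg
  have hps := hp.isSelfAdjoint
  have h' : ‖(1 - g) * p‖ ≤ δ := by
    rw [← norm_star]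
    simpa [hgs.star_eq, hps.star_eq] using h
  have hp1 : p ≤ 1 := by
    have := star_mul_self_nonneg (1 - p)
    rw [hp.one_sub.1, hp.one_sub.2] at this
    exact sub_nonneg.1 this
  have h1 : g * p * g ≤ g := by
    calc g * p * g ≤ g * 1 * g := hgs.conjugate_le_conjugate hp1
      _ = g * g := by simp
      _ ≤ g := by
        have hspec : ∀ t ∈ spectrum ℝ g, 0 ≤ t ∧ t ≤ 1 := fun t ht =>
          ⟨spectrum_nonneg_of_nonneg hg ht, le_trans (le_abs_self t) <| by
            rcases subsingleton_or_nontrivial B with hB | hB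
            · simp [spectrum.of_subsingleton] at ht
            · exact (spectrum.norm_le_norm_of_mem ht).trans hg1⟩
        conv_lhs => rw [← cfc_id' ℝ g]
        conv_rhs => rw [← cfc_id' ℝ g]
        rw [← cfc_mul ..]
        exact cfc_mono fun t ht => by nlinarith [hspec t ht]
  have h2 : ‖p - g * p * g‖ ≤ 2 * δ := by
    have : p - g * p * g = p * (1 - g) + (1 - g) * p * g := by noncomm_ring
    rw [this]
    calc _ ≤ ‖p * (1 - g)‖ + ‖(1 - g) * p‖ * ‖g‖ :=
          (norm_add_le _ _).trans (by gcongr; exact norm_mul_le _ _)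
      _ ≤ δ + δ * 1 := by
          have := (norm_nonneg _).trans h
          gcongr
      _ = 2 * δ := by ring
  have h3 : p - g * p * g ≤ algebraMap ℝ B (2 * δ) :=
    (IsSelfAdjoint.le_algebraMap_norm_self
      (hps.sub (hps.conjugate_self hgs))).trans (algebraMap_mono B h2)
  calc p = g * p * g + (p - g * p * g) := by abel
    _ ≤ _ := add_le_add h1 h3

end Order

section Chain

variable {B : Type*} [CStarAlgebra B]

/-- For an almost decreasing chain of projections `q 0 ≈ 1, …, q N ≈ 0`, the spectrum of
`∑ j < N, q j` stays near the integers. -/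
lemma isUnit_sum_sub_algebraMap {q : ℕ → B} {N : ℕ} {η : ℝ} (hq : ∀ i, IsProjection (q i))
    (hη : (4 * N ^ 2 + 2) * η < 1) (h0 : ‖1 - q 0‖ ≤ η) (hN : ‖q N‖ ≤ η)
    (hlt : ∀ i j, i < j → ‖q j * q i - q j‖ ≤ η) {s : ℝ}
    (hs : ∀ i : ℕ, 1 / 2 ≤ |(i : ℝ) - s|) :
    IsUnit (∑ j ∈ Finset.range N, q j - algebraMap ℝ B s) := by
  have hη0 : 0 ≤ η := (norm_nonneg _).trans h0
  set c := ∑ j ∈ Finset.range N, q j with hc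
  have hmax (i j : ℕ) : ‖q j * q i - q (max i j)‖ ≤ η := by
    rcases lt_trichotomy i j with hij | rfl | hij
    · simpa [hij.le] using hlt i j hij
    · simpa [(hq i).2] using hη0
    · rw [max_eq_left hij.le, (hq j).norm_mul_sub_comm (hq i)]
      exact hlt j i hij
  have hcq (i : ℕ) : ‖c * q i - ∑ j ∈ Finset.range N, q (max i j)‖ ≤ N * η := by
    rw [hc, Finset.sum_mul, ← Finset.sum_sub_distrib]
    refine (norm_sum_le_of_le _ fun j _ => hmax i j).trans ?_
    simp
  have htel (i : ℕ) (hi : i < N) : ∑ j ∈ Finset.range N, q (max i j) -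
      ∑ j ∈ Finset.range N, q (max (i + 1) j) = ((i + 1 : ℕ) : ℝ) • (q i - q (i + 1)) := by
    rw [← Finset.sum_sub_distrib]
    have : ∀ j ∈ Finset.range N, q (max i j) - q (max (i + 1) j) =
        if j ∈ Finset.range (i + 1) then q i - q (i + 1) else 0 := by
      intro j _
      split_ifs with hj
      · rw [Finset.mem_range] at hj
        rw [max_eq_left (by lia), max_eq_left (by lia)]
      · rw [Finset.mem_range] at hj
        rw [max_eq_right (by lia), max_eq_right (by lia), sub_self]
    rw [Finset.sum_congr rfl this, Finset.sum_ite_mem, Finset.inter_eq_right.2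
      (Finset.range_mono (by lia)), Finset.sum_const, Finset.card_range, Nat.cast_smul_eq_nsmul]
  have hce (i : ℕ) (hi : i < N) :
      ‖c * (q i - q (i + 1)) - ((i + 1 : ℕ) : ℝ) • (q i - q (i + 1))‖ ≤ 2 * N * η := by
    rw [← htel i hi]
    calc _ = ‖(c * q i - ∑ j ∈ Finset.range N, q (max i j)) -
          (c * q (i + 1) - ∑ j ∈ Finset.range N, q (max (i + 1) j))‖ := by
            congr 1; noncomm_ring
      _ ≤ N * η + N * η := norm_sub_le_of_le (hcq i) (hcq (i + 1))
      _ = 2 * N * η := by ring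
  set z := ∑ i ∈ Finset.range N, (((i + 1 : ℕ) : ℝ) - s)⁻¹ • (q i - q (i + 1)) with hz
  have hz1 : ‖1 - (c - algebraMap ℝ B s) * z‖ < 1 := by
    have key : 1 - (c - algebraMap ℝ B s) * z = (1 - q 0) + q N -
        ∑ i ∈ Finset.range N, (((i + 1 : ℕ) : ℝ) - s)⁻¹ •
          (c * (q i - q (i + 1)) - ((i + 1 : ℕ) : ℝ) • (q i - q (i + 1))) := by
      have h1 : (1 - q 0) + q N = 1 - ∑ i ∈ Finset.range N, (q i - q (i + 1)) := by
        rw [Finset.sum_range_sub']; abel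
      rw [h1, sub_sub, ← Finset.sum_add_distrib, hz, Finset.mul_sum]
      congr 1
      refine Finset.sum_congr rfl fun i _ => ?_
      have hne : ((i + 1 : ℕ) : ℝ) - s ≠ 0 := by
        intro h
        have := hs (i + 1)
        rw [h] at this
        norm_num at this
      generalize q i - q (i + 1) = e
      generalize ((i + 1 : ℕ) : ℝ) = k at *
      rw [mul_smul_comm, ← eq_inv_smul_iff₀ (inv_ne_zero hne)]
      rw [smul_add, smul_smul, inv_mul_cancel₀ (inv_ne_zero hne), one_smul, inv_inv, sub_mul,
        ← Algebra.smul_def, sub_smul]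
      abel
    rw [key]
    have h3 : ‖∑ i ∈ Finset.range N, (((i + 1 : ℕ) : ℝ) - s)⁻¹ •
          (c * (q i - q (i + 1)) - ((i + 1 : ℕ) : ℝ) • (q i - q (i + 1)))‖ ≤
          N * (2 * (2 * N * η)) := by
      refine (norm_sum_le_of_le (f := fun i => _) _ (n := fun _ => 2 * (2 * N * η))
        fun i hi => ?_).trans (by simp)
      rw [norm_smul, norm_inv, Real.norm_eq_abs]
      have h4 : |((i + 1 : ℕ) : ℝ) - s|⁻¹ ≤ 2 := by
        rw [← inv_inv (2 : ℝ)]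
        exact inv_anti₀ (by norm_num) (by simpa using hs (i + 1))
      exact mul_le_mul h4 (hce i (Finset.mem_range.1 hi)) (norm_nonneg _) (by norm_num)
    calc _ ≤ (η + η) + N * (2 * (2 * N * η)) :=
          norm_sub_le_of_le (norm_add_le_of_le h0 hN) h3
      _ = (4 * N ^ 2 + 2) * η := by ring
      _ < 1 := hη
  have hu : IsUnit ((c - algebraMap ℝ B s) * z) := by
    simpa using isUnit_one_sub_of_norm_lt_one hz1
  have hsa : IsSelfAdjoint (c - algebraMap ℝ B s) :=
    (isSelfAdjoint_sum _ fun i _ => (hq i).isSelfAdjoint).sub (.algebraMap B (.all s))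
  have hu' := hu.star
  rw [star_mul, hsa.star_eq] at hu'
  obtain ⟨v, hv⟩ := hu.exists_right_inv
  obtain ⟨w, hw⟩ := hu'.exists_left_inv
  exact isUnit_iff_exists_and_exists.2
    ⟨⟨z * v, by rw [← mul_assoc, hv]⟩, ⟨w * star z, by rw [mul_assoc, hw]⟩⟩

end Chain

section Round

lemma continuousOn_round {S : Set ℝ} (hS : ∀ k : ℤ, (k + 1 / 2 : ℝ) ∉ S) :
    ContinuousOn (fun t : ℝ => (round t : ℝ)) S := by
  intro t ht
  refine ContinuousAt.continuousWithinAt ?_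
  have h1 : ((round t : ℤ) : ℝ) - 1 / 2 < t := by
    refine lt_of_le_of_ne (by linarith [abs_le.1 (abs_sub_round t)]) fun h => hS (round t - 1) ?_
    convert ht using 1
    push_cast
    linarith
  have h2 : t < round t + 1 / 2 := by
    refine lt_of_le_of_ne (by linarith [abs_le.1 (abs_sub_round t)]) fun h => hS (round t) ?_
    rwa [← h]
  refine (continuousAt_const (y := ((round t : ℤ) : ℝ))).congr ?_
  filter_upwards [Ioo_mem_nhds h1 h2] with u hu
  have : round u = round t := by
    rw [round_eq, Int.floor_eq_iff]
    constructor <;> linarith [hu.1, hu.2]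
  rw [this]

variable {B : Type*} [CStarAlgebra B]

lemma IsSelfAdjoint.finite_spectrum_complex {b : B} (hb : IsSelfAdjoint b)
    (h : (spectrum ℝ b).Finite) : (spectrum ℂ b).Finite := by
  rw [← hb.spectrumRestricts.algebraMap_image]
  exact h.image _

/-- A self-adjoint element whose spectrum misses all half-integers is within `1 / 2` of a
self-adjoint element with finite spectrum. -/
lemma IsSelfAdjoint.exists_finite_spectrum_norm_sub_le {c : B} (hc : IsSelfAdjoint c)
    (h : ∀ k : ℤ, (k + 1 / 2 : ℝ) ∉ spectrum ℝ c) :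
    ∃ b : B, IsSelfAdjoint b ∧ (spectrum ℝ b).Finite ∧ ‖c - b‖ ≤ 1 / 2 := by
  have hcont := continuousOn_round h
  refine ⟨cfc (fun t : ℝ => (round t : ℝ)) c, cfc_predicate _ _, ?_, ?_⟩
  · rw [cfc_map_spectrum (fun t : ℝ => (round t : ℝ)) c]
    obtain ⟨R, hR⟩ := (spectrum.isBounded (𝕜 := ℝ) c).subset_closedBall 0
    refine ((Set.finite_Icc (round (-R)) (round R)).image (fun k : ℤ => (k : ℝ))).subset ?_
    rintro _ ⟨t, ht, rfl⟩
    have hmono : Monotone (round : ℝ → ℤ) := fun u v huv => by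
      simp only [round_eq]
      gcongr
    have := abs_le.1 (by simpa using hR ht : |t| ≤ R)
    exact ⟨round t, ⟨hmono this.1, hmono this.2⟩, rfl⟩
  · nth_rewrite 1 [← cfc_id' ℝ c]
    rw [← cfc_sub ..]
    exact norm_cfc_le (by norm_num) fun t _ => abs_sub_round t

end Round

section Approximation

variable {B : Type*} [CStarAlgebra B] [PartialOrder B] [StarOrderedRing B]

/-- The ramp function rising from `0` to `1` on `[j, j + 1]`. -/
noncomputable def ramp (j : ℕ) (t : ℝ) : ℝ := max 0 (min 1 (t - j))

lemma continuous_ramp (j : ℕ) : Continuous (ramp j) := by unfold ramp; fun_prop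

lemma ramp_nonneg (j : ℕ) (t : ℝ) : 0 ≤ ramp j t := le_max_left _ _

lemma ramp_le_one (j : ℕ) (t : ℝ) : ramp j t ≤ 1 := max_le zero_le_one (min_le_left _ _)

lemma ramp_eq_one {j : ℕ} {t : ℝ} (h : j + 1 ≤ t) : ramp j t = 1 := by
  rw [ramp, min_eq_left (by linarith), max_eq_right zero_le_one]

lemma ramp_eq_zero {j : ℕ} {t : ℝ} (h : t ≤ j) : ramp j t = 0 :=
  max_eq_left ((min_le_right _ _).trans (by linarith))

lemma ramp_mul_ramp_of_lt {i j : ℕ} (hij : i < j) (t : ℝ) : ramp i t * ramp j t = ramp j t := by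
  have h : (i : ℝ) + 1 ≤ j := by exact_mod_cast hij
  rcases le_total t j with ht | ht
  · rw [ramp_eq_zero ht, mul_zero]
  · rw [ramp_eq_one (h.trans ht), one_mul]

lemma sum_range_ramp (N : ℕ) {t : ℝ} (ht : 0 ≤ t) :
    ∑ j ∈ Finset.range N, ramp j t = min t N := by
  induction N with
  | zero => simp [ht]
  | succ n ih =>
    rw [Finset.sum_range_succ, ih]
    push_cast
    rcases le_total t n with h | h
    · rw [ramp_eq_zero h, min_eq_left h, min_eq_left (by linarith), add_zero]
    · rw [min_eq_right h, ramp, max_eq_right (le_min zero_le_one (by linarith)), ← min_add_add_left]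
      rw [min_comm]
      simp

lemma exists_near_of_spectrum_subset {A : StarSubalgebra ℂ B} (hA : IsClosed (A : Set B))
    (h : ∀ x ∈ A, ∀ y ∈ A, 0 ≤ x → 0 ≤ y → x * y = 0 → ∀ ε : ℝ, 0 < ε →
      ∃ p : B, IsProjection p ∧ ‖p * x - x‖ ≤ ε ∧ ‖(1 - p) * y - y‖ ≤ ε)
    {x : B} (hxA : x ∈ A) (hx : IsSelfAdjoint x) {N : ℕ}
    (hspec : spectrum ℝ x ⊆ Set.Icc 2 N) :
    ∃ c : B, IsSelfAdjoint c ∧ (∀ k : ℤ, (k + 1 / 2 : ℝ) ∉ spectrum ℝ c) ∧ ‖x - c‖ ≤ 2 := by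
  set G : ℕ → B := fun j => cfc (ramp j) x with hGdef
  have hcr (j : ℕ) : ContinuousOn (ramp j) (spectrum ℝ x) := (continuous_ramp j).continuousOn
  have hGA (j : ℕ) : G j ∈ A := cfc_mem (𝕜' := ℂ) (hs := hA) _ hxA
  have hG0 (j : ℕ) : 0 ≤ G j := cfc_nonneg fun t _ => ramp_nonneg j t
  have hGle (j : ℕ) : G j ≤ 1 := cfc_le_one _ _ fun t _ => ramp_le_one j t
  have hG1 (j : ℕ) : ‖G j‖ ≤ 1 := norm_cfc_le zero_le_one fun t _ => by
    rw [Real.norm_of_nonneg (ramp_nonneg j t)]; exact ramp_le_one j t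
  have hGG {i j : ℕ} (hij : i < j) : G i * G j = G j := by
    simp only [hGdef]
    rw [← cfc_mul _ _ x (hcr i) (hcr j)]
    exact cfc_congr fun t _ => ramp_mul_ramp_of_lt hij t
  have hGone {j : ℕ} (hj : j < 2) : G j = 1 := by
    rw [← cfc_const_one ℝ x]
    refine cfc_congr fun t ht => ramp_eq_one ?_
    have : (j : ℝ) + 1 ≤ 2 := by exact_mod_cast hj
    exact this.trans (hspec ht).1
  have hGN : G N = 0 := by
    rw [← cfc_const_zero ℝ x]
    exact cfc_congr fun t ht => ramp_eq_zero (hspec ht).2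
  have hGsum : ∑ j ∈ Finset.range N, G j = x := by
    simp only [hGdef]
    rw [← cfc_sum _ _ _ fun j _ => hcr j]
    conv_rhs => rw [← cfc_id' ℝ x]
    refine cfc_congr fun t ht => ?_
    simp only [Finset.sum_apply]
    rw [sum_range_ramp N (by linarith [(hspec ht).1]), min_eq_left (hspec ht).2]
  obtain ⟨δ, hδ, hδN⟩ : ∃ δ : ℝ, 0 < δ ∧ (4 * N ^ 2 + 2) * (2 * δ) < 1 := by
    refine ⟨1 / (4 * (4 * N ^ 2 + 2)), by positivity, ?_⟩
    field_simp
    norm_num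
  choose q hq hqx hqy using fun j : ℕ => h (G (j + 1)) (hGA _) (1 - G j)
    (sub_mem (one_mem A) (hGA j)) (hG0 _) (sub_nonneg.2 (hGle j)) (by
      have := congrArg star (hGG (Nat.lt_succ_self j))
      rw [star_mul, (IsSelfAdjoint.of_nonneg (hG0 j)).star_eq,
        (IsSelfAdjoint.of_nonneg (hG0 _)).star_eq] at this
      rw [mul_sub, mul_one, sub_eq_zero]
      exact this.symm) δ hδ
  replace hqx (j : ℕ) : ‖(1 - q j) * G (j + 1)‖ ≤ δ := by
    rw [sub_mul, one_mul, norm_sub_rev]; exact hqx j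
  replace hqy (j : ℕ) : ‖q j * (1 - G j)‖ ≤ δ := by
    have := hqy j
    rwa [sub_mul, one_mul, sub_sub_cancel_left, norm_neg] at this
  have hqx' {i j : ℕ} (hij : i < j) : ‖(1 - q i) * G j‖ ≤ δ := by
    rcases (Nat.succ_le_of_lt hij).eq_or_lt with rfl | hlt
    · exact hqx i
    · rw [← hGG hlt, ← mul_assoc]
      exact (norm_mul_le _ _).trans
        ((mul_le_of_le_one_right (norm_nonneg _) (hG1 j)).trans (hqx i))
  have hlt (i j : ℕ) (hij : i < j) : ‖q j * q i - q j‖ ≤ 2 * δ := by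
    have e : -star (q j * q i - q j) =
        (1 - q i) * G j * q j + (1 - q i) * star (q j * (1 - G j)) := by
      simp only [star_sub, star_mul, (hq _).1, star_one, (IsSelfAdjoint.of_nonneg (hG0 j)).star_eq]
      noncomm_ring
    rw [← norm_star, ← norm_neg, e]
    calc _ ≤ δ * 1 + 1 * δ := by
          refine norm_add_le_of_le (norm_mul_le_of_le (hqx' hij) (hq j).norm_le_one)
            (norm_mul_le_of_le (hq i).one_sub.norm_le_one ?_)
          rw [norm_star]; exact hqy j
      _ = 2 * δ := by ring
  have hu (j : ℕ) : q j ≤ G j + algebraMap ℝ B (2 * δ) :=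
    (hq j).le_add_algebraMap (hG0 j) (hG1 j) (hqy j)
  have hl (j : ℕ) : G (j + 1) - algebraMap ℝ B (2 * δ) ≤ q j := by
    have := (hq j).one_sub.le_add_algebraMap (g := 1 - G (j + 1)) (δ := δ)
      (sub_nonneg.2 (hGle _)) ((CStarAlgebra.norm_le_one_iff_of_nonneg _
        (sub_nonneg.2 (hGle _))).2 (sub_le_self _ (hG0 _))) (by simpa using hqx j)
    rw [sub_add_eq_add_sub, add_comm, add_sub_assoc] at this
    have h2 := sub_le_sub_left this 1
    rw [sub_sub_cancel] at h2
    convert h2 using 1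
    abel
  have hNδ : N * (2 * δ) ≤ 1 := by
    have : (N : ℝ) ≤ 4 * N ^ 2 + 2 := by nlinarith [sq_nonneg ((N : ℝ) - 1)]
    nlinarith
  have halg : algebraMap ℝ B (N * (2 * δ)) ≤ 1 := by
    simpa using algebraMap_mono B hNδ
  have hcsa : IsSelfAdjoint (∑ j ∈ Finset.range N, q j) :=
    isSelfAdjoint_sum _ fun i _ => (hq i).isSelfAdjoint
  refine ⟨∑ j ∈ Finset.range N, q j, hcsa, fun k => ?_, ?_⟩
  · rw [spectrum.notMem_iff, ← neg_sub, IsUnit.neg_iff]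
    refine isUnit_sum_sub_algebraMap hq hδN ?_ ?_ hlt fun i => ?_
    · have := hqx 0
      rw [hGone (by norm_num), mul_one] at this
      linarith
    · have := hqy N
      rw [hGN, sub_zero, mul_one] at this
      linarith
    · have h1 : ((i : ℝ) - (k + 1 / 2)) = ((i - k : ℤ) : ℝ) - 1 / 2 := by push_cast; ring
      rw [h1]
      rcases le_or_gt (i - k : ℤ) 0 with hle | hgt
      · have : ((i - k : ℤ) : ℝ) ≤ 0 := by exact_mod_cast hle
        rw [abs_of_nonpos (by linarith)]
        linarith
      · have : (1 : ℝ) ≤ ((i - k : ℤ) : ℝ) := by exact_mod_cast hgt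
        rw [abs_of_nonneg (by linarith)]
        linarith
  · have hupper : ∑ j ∈ Finset.range N, q j ≤ x + 1 := by
      refine (Finset.sum_le_sum fun j _ => hu j).trans ?_
      rw [Finset.sum_add_distrib, hGsum, Finset.sum_const, Finset.card_range, nsmul_eq_mul]
      gcongr
      simpa using halg
    have hlower : x - 2 ≤ ∑ j ∈ Finset.range N, q j := by
      refine le_trans ?_ (Finset.sum_le_sum fun j _ => hl j)
      have hshift : ∑ j ∈ Finset.range N, G (j + 1) = x - G 0 := by
        have h1 := Finset.sum_range_succ G N
        rw [Finset.sum_range_succ', hGN, hGsum, add_zero] at h1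
        exact eq_sub_of_add_eq h1
      rw [Finset.sum_sub_distrib, hshift, Finset.sum_const, Finset.card_range, nsmul_eq_mul,
        hGone (by norm_num)]
      have : x - 2 = x - 1 - 1 := by rw [sub_sub, one_add_one_eq_two]
      rw [this]
      gcongr
      simpa using halg
    refine norm_le_of_neg_algebraMap_le_of_le_algebraMap zero_le_two ?_ ?_ (hx.sub hcsa)
    · rw [map_ofNat, neg_le_sub_iff_le_add]
      refine hupper.trans ?_
      gcongr
      have := algebraMap_mono B (one_le_two (α := ℝ))
      rwa [map_one, map_ofNat] at this
    · rw [map_ofNat]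
      exact sub_le_comm.1 hlower

end Approximation

theorem stmt4 {B : Type*} [CStarAlgebra B] [PartialOrder B] [StarOrderedRing B]
    (A : StarSubalgebra ℂ B) (hA : IsClosed (A : Set B))
    (h : ∀ x ∈ A, ∀ y ∈ A, 0 ≤ x → 0 ≤ y → x * y = 0 → ∀ ε : ℝ, 0 < ε →
      ∃ p : B, IsProjection p ∧ ‖p * x - x‖ ≤ ε ∧ ‖(1 - p) * y - y‖ ≤ ε) :
    ∀ a ∈ A, IsSelfAdjoint a → ∀ ε : ℝ, 0 < ε →
      ∃ b : B, IsSelfAdjoint b ∧ (spectrum ℂ b).Finite ∧ ‖a - b‖ ≤ ε := by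
  intro a haA ha ε hε
  set M : ℝ := 2 + 3 / ε * ‖a‖ with hM
  set x : B := cfc (fun t : ℝ => 3 / ε * t + M) a with hx
  have hxsa : IsSelfAdjoint x := cfc_predicate _ _
  have hxa : x = (3 / ε) • a + algebraMap ℝ B M := by
    rw [hx, cfc_add_const .., cfc_const_mul_id ..]
  have hspec : spectrum ℝ x ⊆ Set.Icc 2 (⌈2 * M⌉₊ : ℕ) := by
    rcases subsingleton_or_nontrivial B with hB | hB
    · simp [spectrum.of_subsingleton]
    rw [hx, cfc_map_spectrum (fun t : ℝ => 3 / ε * t + M) a]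
    rintro _ ⟨t, ht, rfl⟩
    have h1 := abs_le.1 (spectrum.norm_le_norm_of_mem ht)
    have h2 : 3 / ε * -‖a‖ ≤ 3 / ε * t := by gcongr; exact h1.1
    have h3 : 3 / ε * t ≤ 3 / ε * ‖a‖ := by gcongr; exact h1.2
    refine ⟨?_, le_trans ?_ (Nat.le_ceil _)⟩
    · simp only [hM]; linarith
    · simp only [hM]; linarith
  obtain ⟨c, hc, hck, hxc⟩ := exists_near_of_spectrum_subset hA h
    (cfc_mem (𝕜' := ℂ) (hs := hA) _ haA) hxsa hspec
  obtain ⟨b, hb, hbf, hcb⟩ := hc.exists_finite_spectrum_norm_sub_le hck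
  have hb' : IsSelfAdjoint (cfc (fun t : ℝ => ε / 3 * (t - M)) b) := cfc_predicate _ _
  refine ⟨cfc (fun t : ℝ => ε / 3 * (t - M)) b, hb', hb'.finite_spectrum_complex ?_, ?_⟩
  · rw [cfc_map_spectrum (fun t : ℝ => ε / 3 * (t - M)) b]
    exact hbf.image _
  · have e : a - cfc (fun t : ℝ => ε / 3 * (t - M)) b = (ε / 3) • ((x - c) + (c - b)) := by
      rw [cfc_const_mul .., cfc_sub .., cfc_id' .., cfc_const .., hxa, sub_add_sub_cancel,
        add_sub_assoc, smul_add, smul_smul, smul_sub, smul_sub]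
      rw [div_mul_div_comm, mul_comm ε 3, div_self (by positivity), one_smul]
      abel
    rw [e, norm_smul, Real.norm_of_nonneg (by positivity)]
    calc _ ≤ ε / 3 * (2 + 1 / 2) := by gcongr; exact norm_add_le_of_le hxc hcb
      _ ≤ ε := by linarith
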